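/- arXiv:2504.15550 — 6 statements merged into one kernel-verified Lean document; each statement's English description precedes it below -/
import Mathlib

section
/- For any predictor P, there exists a partial function f_P taking oracles to leakage traces (i.e., f_P : oracle → Option (leakage trace)) such that for every oracle A and every leakage trace k compatible with A, we have: P predicts k if and only if f_P A = some k. -/
/-! Fix an oracle `A`. Along a trace that is compatible with `A` and predicted by `P`, each prefix
determines what follows: `P` says whether the trace ends, leaks a given value, or makes a
nondeterministic choice, and in the last case `A` supplies the chosen value. Hence at most one
trace is both compatible with `A` and predicted by `P` (`predicted_unique`), and `f A` is that
trace if it exists and `none` otherwise. -/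

inductive LeakageEvent (α : Type*) where
  | Leak : α → LeakageEvent α
  | CompNonDet : α → LeakageEvent α

abbrev Trace (α : Type*) := List (LeakageEvent α)
abbrev Oracle (α : Type*) := Trace α → α

def Compatible {α : Type*} (k : Trace α) (A : Oracle α) : Prop :=
  ∀ k₁ k₂ x, k = k₁ ++ [LeakageEvent.CompNonDet x] ++ k₂ → A k₁ = x

inductive Qevent (α : Type*) where
  | qCompNonDet : Qevent α
  | qLeak : α → Qevent α
  | qEnd : Qevent α

abbrev Predictor (α : Type*) := Trace α → Qevent α

def Predicts {α : Type*} (P : Predictor α) (k : Trace α) : Prop :=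
  (∀ k₁ x k₂, k = k₁ ++ [LeakageEvent.Leak x] ++ k₂ → P k₁ = Qevent.qLeak x) ∧
  (∀ k₁ x k₂, k = k₁ ++ [LeakageEvent.CompNonDet x] ++ k₂ → P k₁ = Qevent.qCompNonDet) ∧
  P k = Qevent.qEnd

/-- The event that must follow a prefix on which the predictor answers `q` and the oracle answers
`a`; `none` means that the trace ends there. -/
def nextEvent {α : Type*} (q : Qevent α) (a : α) : Option (LeakageEvent α) :=
  match q with
  | .qCompNonDet => some (.CompNonDet a)
  | .qLeak x => some (.Leak x)
  | .qEnd => none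

theorem nextEvent_eq_head? {α : Type*} {P : Predictor α} {A : Oracle α} {k : Trace α}
    (hc : Compatible k A) (hp : Predicts P k) (p s : Trace α) (h : k = p ++ s) :
    nextEvent (P p) (A p) = s.head? := by
  obtain ⟨hl, hn, he⟩ := hp
  rcases s with _ | ⟨_ | x, s⟩
  · have hk : k = p := by simpa using h
    subst hk
    simp [he, nextEvent]
  · simp [hl p _ s (by simpa using h), nextEvent]
  · simp [hn p x s (by simpa using h), hc p s x (by simpa using h), nextEvent]

theorem predicted_unique {α : Type*} {P : Predictor α} {A : Oracle α} {k k' : Trace α}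
    (hc : Compatible k A) (hp : Predicts P k) (hc' : Compatible k' A) (hp' : Predicts P k') :
    k = k' := by
  -- Two continuations of a common prefix `p` agree, by induction on the first one.
  have key : ∀ s p s' : Trace α, k = p ++ s → k' = p ++ s' → s = s' := by
    intro s
    induction s with
    | nil =>
      intro p s' h h'
      have e := (nextEvent_eq_head? hc hp p _ h).symm.trans (nextEvent_eq_head? hc' hp' p _ h')
      cases s' <;> simp_all
    | cons e s ih =>
      intro p s' h h'
      have e := (nextEvent_eq_head? hc hp p _ h).symm.trans (nextEvent_eq_head? hc' hp' p _ h')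
      rcases s' with _ | ⟨e', s'⟩
      · simp at e
      · obtain rfl : _ = e' := by simpa using e
        rw [ih (p ++ [_]) s' (by simpa using h) (by simpa using h')]
  exact key k [] k' rfl rfl

theorem predictor_is_partial_function_of_oracle {α : Type*} [Nonempty α]
    (P : Predictor α) :
    ∃ f : Oracle α → Option (Trace α),
      ∀ (A : Oracle α) (k : Trace α), Compatible k A →
        (Predicts P k ↔ f A = some k) := by
  classical
  refine ⟨fun A => if h : ∃ k, Compatible k A ∧ Predicts P k then some h.choose else none, ?_⟩
  intro A k hc
  constructor
  · intro hp
    have h : ∃ k, Compatible k A ∧ Predicts P k := ⟨k, hc, hp⟩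
    simp only [dif_pos h, Option.some.injEq]
    exact predicted_unique h.choose_spec.1 h.choose_spec.2 hc hp
  · intro hf
    by_cases h : ∃ k, Compatible k A ∧ Predicts P k
    · simp only [dif_pos h, Option.some.injEq] at hf
      exact hf ▸ h.choose_spec.2
    · simp [dif_neg h] at hf
end

section
/- If a predictor P predicts both traces k and k', and both k and k' are compatible with the same oracle A, then k = k'. (A predictor together with a compatible oracle determines the leakage trace uniquely.) -/
/-- The event that `P` and `A` together force after the prefix `p`; `none` means that the trace
ends at `p`. -/
def forcedEvent {α : Type*} (P : Predictor α) (A : Oracle α) (p : Trace α) :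
    Option (LeakageEvent α) :=
  match P p with
  | Qevent.qCompNonDet => some (LeakageEvent.CompNonDet (A p))
  | Qevent.qLeak x => some (LeakageEvent.Leak x)
  | Qevent.qEnd => none

/-- At every position, a predicted and compatible trace continues, or ends, as forced. -/
theorem forcedEvent_eq_head? {α : Type*} {P : Predictor α} {A : Oracle α} {p s : Trace α}
    (hP : Predicts P (p ++ s)) (hA : Compatible (p ++ s) A) :
    forcedEvent P A p = s.head? := by
  obtain ⟨hLeak, hNonDet, hEnd⟩ := hP
  rcases s with _ | ⟨x | x, s⟩
  · rw [List.append_nil] at hEnd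
    simp [forcedEvent, hEnd]
  · simp [forcedEvent, hLeak p x s (by simp)]
  · simp [forcedEvent, hNonDet p x s (by simp), hA p s x (by simp)]

theorem suffix_unique {α : Type*} {P : Predictor α} {A : Oracle α} (s : Trace α) :
    ∀ p s' : Trace α, Predicts P (p ++ s) → Predicts P (p ++ s') →
      Compatible (p ++ s) A → Compatible (p ++ s') A → s = s' := by
  induction s with
  | nil =>
    intro p s' hP hP' hA hA'
    have h := (forcedEvent_eq_head? hP hA).symm.trans (forcedEvent_eq_head? hP' hA')
    cases s' with
    | nil => rfl
    | cons e' s' => simp at h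
  | cons e s ih =>
    intro p s' hP hP' hA hA'
    have h := (forcedEvent_eq_head? hP hA).symm.trans (forcedEvent_eq_head? hP' hA')
    cases s' with
    | nil => simp at h
    | cons e' s' =>
      obtain rfl : e = e' := by simpa using h
      rw [List.append_cons] at hP hP' hA hA'
      rw [ih (p ++ [e]) s' hP hP' hA hA']

theorem predicts_unique_of_compatible {α : Type*} (P : Predictor α)
    (k k' : Trace α) (A : Oracle α)
    (hk : Predicts P k) (hk' : Predicts P k')
    (hkA : Compatible k A) (hk'A : Compatible k' A) :
    k = k' := by
  exact suffix_unique k [] k' hk hk' hkA hk'A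
end

section
/- For every leakage tree T, there exists a predictor P such that for all leakage traces k, k is a path in T if and only if P predicts k. -/
inductive LeakageTree (α : Type*) where
  | TreeLeaf : LeakageTree α
  | TreeLeak : α → LeakageTree α → LeakageTree α
  | TreeBranch : (α → LeakageTree α) → LeakageTree α

inductive PathIn {α : Type*} : Trace α → LeakageTree α → Prop where
  | nil : PathIn [] LeakageTree.TreeLeaf
  | leak {k t x} : PathIn k t → PathIn (LeakageEvent.Leak x :: k) (LeakageTree.TreeLeak x t)
  | branch {k f x} : PathIn k (f x) → PathIn (LeakageEvent.CompNonDet x :: k) (LeakageTree.TreeBranch f)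

theorem predicts_nil {α : Type*} (P : Predictor α) : Predicts P [] ↔ P [] = Qevent.qEnd := by
  simp [Predicts]

theorem predicts_leak_cons {α : Type*} (P : Predictor α) (x : α) (k : Trace α) :
    Predicts P (LeakageEvent.Leak x :: k) ↔
      P [] = Qevent.qLeak x ∧ Predicts (fun l => P (LeakageEvent.Leak x :: l)) k := by
  constructor
  · rintro ⟨h₁, h₂, h₃⟩
    exact ⟨h₁ [] x k rfl, fun k₁ y k₂ h => h₁ (_ :: k₁) y k₂ (by simp [h]),
      fun k₁ y k₂ h => h₂ (_ :: k₁) y k₂ (by simp [h]), h₃⟩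
  · rintro ⟨h₀, h₁, h₂, h₃⟩
    refine ⟨fun k₁ y k₂ h => ?_, fun k₁ y k₂ h => ?_, h₃⟩
    · cases k₁ with
      | nil =>
        simp at h
        rw [h₀, h.1]
      | cons e k₁ =>
        simp at h
        rw [← h.1]
        exact h₁ k₁ y k₂ (by simp [h.2])
    · cases k₁ with
      | nil => simp at h
      | cons e k₁ =>
        simp at h
        rw [← h.1]
        exact h₂ k₁ y k₂ (by simp [h.2])

theorem predicts_compNonDet_cons {α : Type*} (P : Predictor α) (x : α) (k : Trace α) :
    Predicts P (LeakageEvent.CompNonDet x :: k) ↔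
      P [] = Qevent.qCompNonDet ∧
        Predicts (fun l => P (LeakageEvent.CompNonDet x :: l)) k := by
  constructor
  · rintro ⟨h₁, h₂, h₃⟩
    exact ⟨h₂ [] x k rfl, fun k₁ y k₂ h => h₁ (_ :: k₁) y k₂ (by simp [h]),
      fun k₁ y k₂ h => h₂ (_ :: k₁) y k₂ (by simp [h]), h₃⟩
  · rintro ⟨h₀, h₁, h₂, h₃⟩
    refine ⟨fun k₁ y k₂ h => ?_, fun k₁ y k₂ h => ?_, h₃⟩
    · cases k₁ with
      | nil => simp at h
      | cons e k₁ =>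
        simp at h
        rw [← h.1]
        exact h₁ k₁ y k₂ (by simp [h.2])
    · cases k₁ with
      | nil => exact h₀
      | cons e k₁ =>
        simp at h
        rw [← h.1]
        exact h₂ k₁ y k₂ (by simp [h.2])

/-- The predictor read off a tree. Its values on traces that leave the tree are irrelevant, since a
wrong announcement has already been made on a proper prefix. -/
def LeakageTree.predictor {α : Type*} : LeakageTree α → Predictor α
  | .TreeLeaf, _ => .qEnd
  | .TreeLeak x _, [] => .qLeak x
  | .TreeLeak _ t, _ :: l => t.predictor l
  | .TreeBranch _, [] => .qCompNonDet
  | .TreeBranch f, .CompNonDet x :: l => (f x).predictor l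
  | .TreeBranch _, .Leak _ :: _ => .qEnd

theorem tree_to_predictor {α : Type*} (T : LeakageTree α) :
    ∃ P : Predictor α, ∀ k : Trace α, PathIn k T ↔ Predicts P k := by
  refine ⟨T.predictor, ?_⟩
  induction T with
  | TreeLeaf =>
    rintro (_ | ⟨_ | _, k⟩)
    · simp [predicts_nil, LeakageTree.predictor, PathIn.nil]
    · simp only [predicts_leak_cons, LeakageTree.predictor]
      exact ⟨nofun, nofun⟩
    · simp only [predicts_compNonDet_cons, LeakageTree.predictor]
      exact ⟨nofun, nofun⟩
  | TreeLeak x t ih =>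
    rintro (_ | ⟨y | y, k⟩)
    · simp only [predicts_nil, LeakageTree.predictor]
      exact ⟨nofun, nofun⟩
    · simp only [predicts_leak_cons, LeakageTree.predictor]
      constructor
      · rintro ⟨⟩
        exact ⟨rfl, (ih k).1 ‹_›⟩
      · rintro ⟨⟨⟩, h⟩
        exact .leak ((ih k).2 h)
    · simp only [predicts_compNonDet_cons, LeakageTree.predictor]
      exact ⟨nofun, nofun⟩
  | TreeBranch f ih =>
    rintro (_ | ⟨y | y, k⟩)
    · simp only [predicts_nil, LeakageTree.predictor]
      exact ⟨nofun, nofun⟩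
    · simp only [predicts_leak_cons, LeakageTree.predictor]
      exact ⟨nofun, nofun⟩
    · simp only [predicts_compNonDet_cons, LeakageTree.predictor]
      constructor
      · rintro ⟨⟩
        exact ⟨trivial, (ih y k).1 ‹_›⟩
      · rintro ⟨-, h⟩
        exact .branch ((ih y k).2 h)
end

section
/- Suppose a, b : α with a ≠ b. Let P be the predictor defined by: P k = qEnd if the last element of k is CompNonDet a, and P k = qCompNonDet otherwise (in particular P [] = qCompNonDet). Then there does not exist a leakage tree T such that for all leakage traces k, P predicts k if and only if k is a path in T. (Some predictors represent sets of traces that no leakage tree represents.) -/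
/-- The predictor that returns `qEnd` exactly when the last element of the trace is
`CompNonDet a`, and `qCompNonDet` otherwise. -/
def stopAfter {α : Type*} [DecidableEq α] (a : α) : Predictor α := fun k =>
  match k.getLast? with
  | some (LeakageEvent.CompNonDet y) =>
      if y = a then Qevent.qEnd else Qevent.qCompNonDet
  | _ => Qevent.qCompNonDet

/-- The trace `bⁿa`: `n` choices of `b` followed by one choice of `a`. -/
def delayedStop {α : Type*} (a b : α) (n : ℕ) : Trace α :=
  List.replicate n (LeakageEvent.CompNonDet b) ++ [LeakageEvent.CompNonDet a]

theorem predicts_delayedStop {α : Type*} [DecidableEq α] {a b : α} (hab : a ≠ b) (n : ℕ) :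
    Predicts (stopAfter a) (delayedStop a b n) := by
  refine ⟨fun k₁ x k₂ h => ?_, fun k₁ x k₂ h => ?_, by simp [stopAfter, delayedStop]⟩
  · have hmem : LeakageEvent.Leak x ∈ delayedStop a b n := by simp [h]
    simp [delayedStop] at hmem
  · -- A proper prefix of `bⁿa` is a prefix of `bⁿ`, so its last event, if any, is `b`.
    have hlen : k₁.length ≤ n := by
      have := congrArg List.length h
      simp [delayedStop] at this
      omega
    have hk : k₁ = List.replicate k₁.length (LeakageEvent.CompNonDet b) := by
      have := congrArg (List.take k₁.length) h
      simp [delayedStop, List.take_append, hlen, Nat.sub_eq_zero_of_le hlen] at this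
      exact this.symm
    rw [hk]
    cases k₁.length with
    | zero => rfl
    | succ m => simp [stopAfter, List.getLast?_replicate, hab.symm]

theorem exists_not_pathIn {α : Type*} (a b : α) (T : LeakageTree α) :
    ∃ n, ¬ PathIn (delayedStop a b n) T := by
  induction T with
  | TreeLeaf => exact ⟨0, fun h => nomatch h⟩
  | TreeLeak x t _ => exact ⟨0, fun h => nomatch h⟩
  | TreeBranch f ih =>
    obtain ⟨n, hn⟩ := ih b
    refine ⟨n + 1, fun h => hn ?_⟩
    have hcons : delayedStop a b (n + 1) =
        LeakageEvent.CompNonDet b :: delayedStop a b n := rfl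
    rw [hcons] at h
    cases h with
    | branch h => exact h

theorem no_tree_for_stopAfter {α : Type*} [DecidableEq α] (a b : α) (hab : a ≠ b) :
    ¬ ∃ T : LeakageTree α, ∀ k : Trace α, Predicts (stopAfter a) k ↔ PathIn k T := by
  rintro ⟨T, hT⟩
  obtain ⟨n, hn⟩ := exists_not_pathIn a b T
  exact hn ((hT _).1 (predicts_delayedStop hab n))
end

section
/- If k and k' are both paths in the same leakage tree T, and both k and k' are compatible with the same oracle A, then k = k'. -/
/-- Dropping the first event `e` of a compatible trace leaves a trace compatible with the oracle
that puts `e` back in front of its argument. -/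
theorem Compatible.tail {α : Type*} {e : LeakageEvent α} {k : Trace α} {A : Oracle α}
    (h : Compatible (e :: k) A) : Compatible k (fun l => A (e :: l)) := by
  intro k₁ k₂ x hx
  exact h (e :: k₁) k₂ x (by simp [hx])

theorem Compatible.head {α : Type*} {x : α} {k : Trace α} {A : Oracle α}
    (h : Compatible (LeakageEvent.CompNonDet x :: k) A) : A [] = x :=
  h [] k x rfl

theorem path_unique_of_compatible {α : Type*} (T : LeakageTree α)
    (k k' : Trace α) (A : Oracle α)
    (hk : PathIn k T) (hk' : PathIn k' T)
    (hkA : Compatible k A) (hk'A : Compatible k' A) :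
    k = k' := by
  -- The oracle is generalized because each step into the tree shifts it.
  induction hk generalizing k' A with
  | nil => cases hk'; rfl
  | leak _ ih =>
    cases hk' with
    | leak h' => rw [ih _ _ h' hkA.tail hk'A.tail]
  | branch _ ih =>
    cases hk' with
    | branch h' =>
      -- Both branches taken equal `A []`, so the two paths continue in the same subtree.
      obtain rfl := hkA.head
      obtain rfl := hk'A.head
      rw [ih _ _ h' hkA.tail hk'A.tail]
end

section
/- Let T₁ be a leakage tree, and let T₂ be a function taking leakage traces to leakage trees. Then there exists a leakage tree T such that for all traces k₁ and k₂: if k₁ is a path in T₁ and k₂ is a path in T₂ k₁, then k₁ ++ k₂ is a path in T. -/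
theorem tree_append {α : Type*} (T₁ : LeakageTree α) (T₂ : Trace α → LeakageTree α) :
    ∃ T : LeakageTree α, ∀ k₁ k₂ : Trace α,
      PathIn k₁ T₁ → PathIn k₂ (T₂ k₁) → PathIn (k₁ ++ k₂) T := by
  -- Graft `T₂ k₁` onto the leaf of `T₁` reached by `k₁`; in the inductive step the continuation
  -- is shifted by the event just consumed.
  induction T₁ generalizing T₂ with
  | TreeLeaf =>
    refine ⟨T₂ [], fun k₁ k₂ h₁ h₂ => ?_⟩
    cases h₁
    exact h₂
  | TreeLeak x t ih =>
    obtain ⟨T, hT⟩ := ih fun k => T₂ (LeakageEvent.Leak x :: k)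
    refine ⟨LeakageTree.TreeLeak x T, fun k₁ k₂ h₁ h₂ => ?_⟩
    cases h₁ with
    | leak h => exact PathIn.leak (hT _ _ h h₂)
  | TreeBranch f ih =>
    choose T hT using fun x => ih x fun k => T₂ (LeakageEvent.CompNonDet x :: k)
    refine ⟨LeakageTree.TreeBranch T, fun k₁ k₂ h₁ h₂ => ?_⟩
    cases h₁ with
    | branch h => exact PathIn.branch (hT _ _ _ h h₂)
end
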